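/- Let I be a nonempty finite index set of players, let A be a convex subset of a real vector space, let each w_i : A → ℝ be concave on A, and let d_i ∈ ℝ. Suppose a, b ∈ A both satisfy w_i(a) > d_i and w_i(b) > d_i for all i, and both maximize the function a ↦ ∑_{i∈I} log(w_i(a) − d_i) over the set S = {x ∈ A : w_i(x) > d_i for all i}. Then w_i(a) = w_i(b) for every i ∈ I. -/

import Mathlib

/-!
Between two maximizers, a sum of concave functions is constant, so each summand is affine on the
segment joining them. When the summands are `log (wᵢ - dᵢ)` with `wᵢ` concave, strict concavity of
`log` forbids this at the midpoint unless `wᵢ` takes the same value at both ends.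
-/

open Set

section ConcaveComp

variable {𝕜 E β γ : Type*} [Semiring 𝕜] [PartialOrder 𝕜]
  [AddCommMonoid E] [SMul 𝕜 E]
  [AddCommMonoid β] [PartialOrder β] [SMul 𝕜 β]
  [AddCommMonoid γ] [PartialOrder γ] [SMul 𝕜 γ]
  {s : Set E} {t : Set β} {f : E → β} {φ : β → γ}

theorem concaveOn_comp_of_mapsTo (hφ : ConcaveOn 𝕜 t φ) (hmono : MonotoneOn φ t)
    (hf : ConcaveOn 𝕜 s f) (hst : MapsTo f s t) : ConcaveOn 𝕜 s (φ ∘ f) := by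
  refine ⟨hf.1, fun x hx y hy p q hp hq hpq ↦ ?_⟩
  calc p • φ (f x) + q • φ (f y)
      ≤ φ (p • f x + q • f y) := hφ.2 (hst hx) (hst hy) hp hq hpq
    _ ≤ φ (f (p • x + q • y)) :=
      hmono (hφ.1 (hst hx) (hst hy) hp hq hpq) (hst (hf.1 hx hy hp hq hpq))
        (hf.2 hx hy hp hq hpq)

theorem eq_of_comp_le_of_strictConcaveOn (hφ : StrictConcaveOn 𝕜 t φ) (hmono : MonotoneOn φ t)
    (hf : ConcaveOn 𝕜 s f) (hst : MapsTo f s t) {x y : E} (hx : x ∈ s) (hy : y ∈ s)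
    {p q : 𝕜} (hp : 0 < p) (hq : 0 < q) (hpq : p + q = 1)
    (hle : φ (f (p • x + q • y)) ≤ p • φ (f x) + q • φ (f y)) : f x = f y := by
  by_contra hne
  refine hle.not_gt ?_
  calc p • φ (f x) + q • φ (f y)
      < φ (p • f x + q • f y) := hφ.2 (hst hx) (hst hy) hne hp hq hpq
    _ ≤ φ (f (p • x + q • y)) :=
      hmono (hφ.1 (hst hx) (hst hy) hp.le hq.le hpq) (hst (hf.1 hx hy hp.le hq.le hpq))
        (hf.2 hx hy hp.le hq.le hpq)

end ConcaveComp

theorem combo_map_eq_of_isMaxOn_sum {𝕜 E β ι : Type*} [Semiring 𝕜] [PartialOrder 𝕜]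
    [AddCommMonoid E] [SMul 𝕜 E]
    [AddCommMonoid β] [PartialOrder β] [IsOrderedCancelAddMonoid β] [Module 𝕜 β]
    {s : Set E} {u : Finset ι} {g : ι → E → β}
    (hg : ∀ i ∈ u, ConcaveOn 𝕜 s (g i)) {x y : E} (hx : x ∈ s) (hy : y ∈ s)
    (hxmax : IsMaxOn (fun z ↦ ∑ i ∈ u, g i z) s x)
    (hymax : IsMaxOn (fun z ↦ ∑ i ∈ u, g i z) s y)
    {p q : 𝕜} (hp : 0 ≤ p) (hq : 0 ≤ q) (hpq : p + q = 1) {i : ι} (hi : i ∈ u) :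
    p • g i x + q • g i y = g i (p • x + q • y) := by
  have hcombo_le : ∀ j ∈ u, p • g j x + q • g j y ≤ g j (p • x + q • y) :=
    fun j hj ↦ (hg j hj).2 hx hy hp hq hpq
  have hmax_eq : ∑ j ∈ u, g j x = ∑ j ∈ u, g j y := (hymax hx).antisymm (hxmax hy)
  have hsum_le : ∑ j ∈ u, g j (p • x + q • y) ≤ ∑ j ∈ u, (p • g j x + q • g j y) :=
    calc ∑ j ∈ u, g j (p • x + q • y)
        ≤ ∑ j ∈ u, g j x := hxmax ((hg i hi).1 hx hy hp hq hpq)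
      _ = p • ∑ j ∈ u, g j x + q • ∑ j ∈ u, g j y := by
        rw [← hmax_eq, ← add_smul, hpq, one_smul]
      _ = ∑ j ∈ u, (p • g j x + q • g j y) := by
        rw [Finset.smul_sum, Finset.smul_sum, Finset.sum_add_distrib]
  exact (Finset.sum_eq_sum_iff_of_le hcombo_le).1
    ((Finset.sum_le_sum hcombo_le).antisymm hsum_le) i hi

theorem eq_of_isMaxOn_sum_strictConcaveOn_comp {𝕜 E β γ ι : Type*}
    [Field 𝕜] [LinearOrder 𝕜] [IsStrictOrderedRing 𝕜]
    [AddCommMonoid E] [SMul 𝕜 E] [AddCommMonoid β] [PartialOrder β] [Module 𝕜 β]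
    [AddCommMonoid γ] [PartialOrder γ] [IsOrderedCancelAddMonoid γ] [Module 𝕜 γ]
    {s : Set E} {u : Finset ι} {t : ι → Set β} {f : ι → E → β} {φ : ι → β → γ}
    (hφ : ∀ i ∈ u, StrictConcaveOn 𝕜 (t i) (φ i)) (hmono : ∀ i ∈ u, MonotoneOn (φ i) (t i))
    (hf : ∀ i ∈ u, ConcaveOn 𝕜 s (f i)) (hst : ∀ i ∈ u, MapsTo (f i) s (t i))
    {x y : E} (hx : x ∈ s) (hy : y ∈ s)
    (hxmax : IsMaxOn (fun z ↦ ∑ i ∈ u, φ i (f i z)) s x)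
    (hymax : IsMaxOn (fun z ↦ ∑ i ∈ u, φ i (f i z)) s y) {i : ι} (hi : i ∈ u) :
    f i x = f i y := by
  have hhalf : (0 : 𝕜) < 1 / 2 := one_half_pos
  have hconcave : ∀ j ∈ u, ConcaveOn 𝕜 s (φ j ∘ f j) := fun j hj ↦
    concaveOn_comp_of_mapsTo (hφ j hj).concaveOn (hmono j hj) (hf j hj) (hst j hj)
  have hmid := combo_map_eq_of_isMaxOn_sum hconcave hx hy hxmax hymax
    hhalf.le hhalf.le (add_halves 1) hi
  exact eq_of_comp_le_of_strictConcaveOn (hφ i hi) (hmono i hi) (hf i hi) (hst i hi) hx hy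
    hhalf hhalf (add_halves 1) hmid.ge

/-- The set `S` over which the logarithm of the Nash product is maximized: the decisions in `A`
that give every player strictly more than the disagreement payoff. -/
def strictlyFeasibleSet {I V β : Type*} [LT β] (A : Set V) (w : I → V → β) (d : I → β) : Set V :=
  {x ∈ A | ∀ i, d i < w i x}

theorem convex_strictlyFeasibleSet {𝕜 I V β : Type*} [Semiring 𝕜] [PartialOrder 𝕜]
    [AddCommMonoid V] [Module 𝕜 V]
    [AddCommMonoid β] [PartialOrder β] [IsOrderedCancelAddMonoid β] [Module 𝕜 β]
    [PosSMulStrictMono 𝕜 β] {A : Set V} {w : I → V → β}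
    (hA : Convex 𝕜 A) (hw : ∀ i, ConcaveOn 𝕜 A (w i)) (d : I → β) :
    Convex 𝕜 (strictlyFeasibleSet A w d) :=
  fun _ hx _ hy _ _ hp hq hpq ↦ ⟨hA hx.1 hy.1 hp hq hpq, fun i ↦
    ((hw i).convex_gt (d i) ⟨hx.1, hx.2 i⟩ ⟨hy.1, hy.2 i⟩ hp hq hpq).2⟩

/-- Uniqueness of the bargained payoff allocation: with concave payoffs over a convex
decision set, any two strictly feasible maximizers of ∑ᵢ log(wᵢ(·) − dᵢ) over the
strictly feasible set yield identical payoffs for every player. -/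
theorem nbs_payoff_uniqueness
    {I : Type*} [Fintype I] [Nonempty I] {V : Type*} [AddCommGroup V] [Module ℝ V]
    (A : Set V) (hA : Convex ℝ A) (w : I → V → ℝ) (hw : ∀ i, ConcaveOn ℝ A (w i))
    (d : I → ℝ) (a b : V) (haA : a ∈ A) (hbA : b ∈ A)
    (ha : ∀ i, d i < w i a) (hb : ∀ i, d i < w i b)
    (hamax : ∀ x ∈ A, (∀ i, d i < w i x) →
      ∑ i, Real.log (w i x - d i) ≤ ∑ i, Real.log (w i a - d i))
    (hbmax : ∀ x ∈ A, (∀ i, d i < w i x) →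
      ∑ i, Real.log (w i x - d i) ≤ ∑ i, Real.log (w i b - d i)) :
    ∀ i, w i a = w i b := by
  intro i
  have hS : Convex ℝ (strictlyFeasibleSet A w d) := convex_strictlyFeasibleSet hA hw d
  have hgain : ∀ j, ConcaveOn ℝ (strictlyFeasibleSet A w d) (fun x ↦ w j x - d j) := fun j ↦
    ConcaveOn.sub ((hw j).subset (sep_subset _ _) hS) (convexOn_const (d j) hS)
  have hgain_eq : w i a - d i = w i b - d i :=
    eq_of_isMaxOn_sum_strictConcaveOn_comp (s := strictlyFeasibleSet A w d)
      (f := fun j x ↦ w j x - d j)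
      (fun _ _ ↦ strictConcaveOn_log_Ioi) (fun _ _ ↦ Real.strictMonoOn_log.monotoneOn)
      (fun j _ ↦ hgain j) (fun j _ _ hx ↦ sub_pos.2 (hx.2 j)) ⟨haA, ha⟩ ⟨hbA, hb⟩
      (fun x hx ↦ hamax x hx.1 hx.2) (fun x hx ↦ hbmax x hx.1 hx.2) (Finset.mem_univ i)
  exact sub_left_injective hgain_eq
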